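/- Let q ≥ 3 be an integer and let χ₀ be the principal Dirichlet character modulo q. Then lim_{s→1} (L(s,χ₀) − φ(q)/(q^s(s−1))) = (φ(q)/q)(log q + ∑_{p|q} (log p)/(p−1) + γ), where the sum is over primes p dividing q and γ is Euler's constant. -/

import Mathlib

open Filter Topology

lemma hasDerivAt_neg_cpow {p : ℕ} (hp : p ≠ 0) :
    HasDerivAt (fun s : ℂ => (p : ℂ) ^ (-s)) (-((p : ℂ)⁻¹ * Complex.log p)) 1 := by
  have h := ((hasDerivAt_id (1 : ℂ)).neg).const_cpow (c := (p : ℂ))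
    (Or.inl (by exact_mod_cast hp))
  have e : (p : ℂ) ^ (-(1 : ℂ)) * Complex.log p * -1 = -((p : ℂ)⁻¹ * Complex.log p) := by
    rw [Complex.cpow_neg_one]; ring
  rw [← e]
  exact h

/-- For `q ≥ 3` with principal character `χ₀` mod `q`:
`lim_{s→1} (L(s,χ₀) − φ(q)/(q^s(s−1))) = (φ(q)/q)(log q + ∑_{p|q} log p/(p−1) + γ)`. -/
theorem tendsto_LFunction_principal_sub_pole {q : ℕ} (hq : 3 ≤ q) :
    haveI : NeZero q := ⟨by omega⟩
    Tendsto
      (fun s : ℂ =>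
        (1 : DirichletCharacter ℂ q).LFunction s - (q.totient : ℂ) / ((q : ℂ) ^ s * (s - 1)))
      (𝓝[≠] 1)
      (𝓝 (((q.totient : ℝ) / q *
        (Real.log q + (∑ p ∈ q.primeFactors, Real.log p / (p - 1)) +
          Real.eulerMascheroniConstant) : ℝ))) := by
  haveI : NeZero q := ⟨by omega⟩
  have hq0 : (q : ℂ) ≠ 0 := by exact_mod_cast (NeZero.ne q)
  set P : ℂ → ℂ := fun s => ∏ p ∈ q.primeFactors, (1 - (p : ℂ) ^ (-s)) with hP
  have hP1 : P 1 = (q.totient : ℂ) / q := by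
    have h := congrArg (fun x : ℚ => (x : ℂ)) (Nat.totient_eq_mul_prod_factors q)
    push_cast at h
    rw [h, mul_div_cancel_left₀ _ hq0]
    simp [hP, Complex.cpow_neg_one]
  have hd : ∀ p ∈ q.primeFactors, HasDerivAt (fun s : ℂ => 1 - (p : ℂ) ^ (-s))
      ((p : ℂ)⁻¹ * Complex.log p) 1 := by
    intro p hp
    simpa using (hasDerivAt_neg_cpow (Nat.prime_of_mem_primeFactors hp).ne_zero).const_sub 1
  have hne : ∀ p ∈ q.primeFactors, (1 - (p : ℂ) ^ (-(1 : ℂ))) ≠ 0 := by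
    intro p hp
    have hp1 := (Nat.prime_of_mem_primeFactors hp).one_lt
    rw [Complex.cpow_neg_one, sub_ne_zero]
    intro h
    have : (p : ℂ) = 1 := by rw [← inv_inv (p : ℂ), ← h, inv_one]
    have : p = 1 := by exact_mod_cast this
    omega
  have hPd : DifferentiableAt ℂ P 1 :=
    DifferentiableAt.fun_finsetProd fun p hp => (hd p hp).differentiableAt
  have hP1ne : P 1 ≠ 0 := Finset.prod_ne_zero_iff.mpr hne
  have hderiv : deriv P 1 = P 1 * ∑ p ∈ q.primeFactors, Complex.log p / ((p : ℂ) - 1) := by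
    have h := logDeriv_prod hne (fun p hp => (hd p hp).differentiableAt)
    change logDeriv P 1 = _ at h
    rw [logDeriv_apply, div_eq_iff hP1ne] at h
    rw [h, mul_comm]
    congr 1
    refine Finset.sum_congr rfl fun p hp => ?_
    have h0 : (p : ℂ) ≠ 0 := by exact_mod_cast (Nat.prime_of_mem_primeFactors hp).ne_zero
    rw [logDeriv_apply, (hd p hp).deriv, Complex.cpow_neg_one,
      show (1 - (p : ℂ)⁻¹) = (p : ℂ)⁻¹ * (p - 1) by field_simp,
      mul_div_mul_left _ _ (inv_ne_zero h0)]
  have hPD := hPd.hasDerivAt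
  rw [hderiv] at hPD
  have hG := hPD.sub ((hasDerivAt_neg_cpow (NeZero.ne q)).const_mul (q.totient : ℂ))
  have hslope := hasDerivAt_iff_tendsto_slope.mp hG
  have hPc : Tendsto P (𝓝[≠] 1) (𝓝 (P 1)) := hPd.continuousAt.tendsto.mono_left nhdsWithin_le_nhds
  have hmain := (hPc.mul tendsto_riemannZeta_sub_one_div).add hslope
  have key : P 1 * (Real.eulerMascheroniConstant : ℂ) +
      (P 1 * ∑ p ∈ q.primeFactors, Complex.log p / ((p : ℂ) - 1) -
        (q.totient : ℂ) * -((q : ℂ)⁻¹ * Complex.log q)) =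
      (((q.totient : ℝ) / q *
        (Real.log q + (∑ p ∈ q.primeFactors, Real.log p / (p - 1)) +
          Real.eulerMascheroniConstant) : ℝ) : ℂ) := by
    push_cast
    simp only [← Complex.natCast_log]
    rw [hP1]
    ring
  rw [key] at hmain
  refine hmain.congr' ?_
  filter_upwards [self_mem_nhdsWithin] with s hs
  have hs1 : s - 1 ≠ 0 := sub_ne_zero.mpr hs
  have hL := DirichletCharacter.LFunctionTrivChar_eq_mul_riemannZeta (N := q) hs
  change (1 : DirichletCharacter ℂ q).LFunction s = P s * riemannZeta s at hL
  rw [hL, slope_def_field]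
  simp only [Pi.sub_apply]
  rw [hP1, Complex.cpow_neg_one, Complex.cpow_neg]
  have : (q : ℂ) ^ s ≠ 0 := by simp [Complex.cpow_eq_zero_iff, hq0]
  field_simp
  ring
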